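/- arXiv:1504.07599 — 13 statements merged into one kernel-verified Lean document; each statement's English description precedes it below -/
import Mathlib

section
/- Let V be a real normed vector space, F, Ḟ : V → V, Δt_FE > 0 and K > 0. Assume F satisfies the forward Euler condition and Ḟ satisfies the second derivative condition with constant K. Let α ≥ 0 and β > 0. Then for every v ∈ V and every Δt with 0 ≤ Δt ≤ (K/(2β))·(√(α²K² + 4β) − αK)·Δt_FE, the two-derivative building block step satisfies ‖v + α·Δt·F(v) + β·Δt²·Ḟ(v)‖ ≤ ‖v‖. -/
/-! Rescale the step to `s = dt / dtFE`. The step-size bound says that `s` lies below the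
positive root of `β s² + α K² s = K²`, i.e. `a + b ≤ 1` for `a = α s` and `b = β s² / K²`.
The building block is then the convex combination, with weights `1 - a - b`, `a`, `b`, of `v`,
the full forward Euler step `v + dtFE • F v`, and the full second derivative step
`v + (K * dtFE) ^ 2 • Fd v`, each of norm at most `‖v‖`. -/

/-- SSP property of the two-derivative building block
`v ↦ v + α·Δt·F(v) + β·Δt²·Ḟ(v)` under the forward Euler condition on `F` and the
second derivative condition (with constant `K`) on `Ḟ`. -/
theorem building_block_ssp {V : Type*} [NormedAddCommGroup V] [NormedSpace ℝ V]
    (F Fd : V → V) (dtFE K : ℝ) (hdtFE : 0 < dtFE) (hK : 0 < K)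
    (hFE : ∀ v : V, ∀ t : ℝ, 0 ≤ t → t ≤ dtFE → ‖v + t • F v‖ ≤ ‖v‖)
    (hSD : ∀ v : V, ∀ t : ℝ, 0 ≤ t → t ≤ K * dtFE → ‖v + t ^ 2 • Fd v‖ ≤ ‖v‖)
    (α β : ℝ) (hα : 0 ≤ α) (hβ : 0 < β) :
    ∀ v : V, ∀ dt : ℝ, 0 ≤ dt →
      dt ≤ K / (2 * β) * (Real.sqrt (α ^ 2 * K ^ 2 + 4 * β) - α * K) * dtFE →
      ‖v + (α * dt) • F v + (β * dt ^ 2) • Fd v‖ ≤ ‖v‖ := by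
  intro v dt hdt hle
  obtain ⟨s, rfl⟩ : ∃ s, dt = s * dtFE := ⟨dt / dtFE, by field_simp⟩
  have hs : 0 ≤ s := nonneg_of_mul_nonneg_left hdt hdtFE
  have hs' := le_of_mul_le_mul_right hle hdtFE
  set S := Real.sqrt (α ^ 2 * K ^ 2 + 4 * β)
  have hS : S ^ 2 = α ^ 2 * K ^ 2 + 4 * β := Real.sq_sqrt (by positivity)
  have h1 : 2 * β * s + α * K ^ 2 ≤ K * S := by
    rw [div_mul_eq_mul_div, le_div_iff₀ (by positivity)] at hs'
    linarith
  have h2 : β * s ^ 2 + α * K ^ 2 * s ≤ K ^ 2 := by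
    have h3 : (2 * β * s + α * K ^ 2) ^ 2 ≤ (K * S) ^ 2 :=
      pow_le_pow_left₀ (by positivity) h1 2
    rw [mul_pow K S, hS] at h3
    refine le_of_mul_le_mul_left ?_ (show 0 < 4 * β by positivity)
    linarith
  obtain ⟨b, hb⟩ : ∃ b, b = β * s ^ 2 / K ^ 2 := ⟨_, rfl⟩
  have hb0 : 0 ≤ b := by rw [hb]; positivity
  have hbK : b * K ^ 2 = β * s ^ 2 := by rw [hb]; field_simp
  have ha0 : 0 ≤ α * s := by positivity
  have hab : α * s + b ≤ 1 := by
    refine le_of_mul_le_mul_right ?_ (show 0 < K ^ 2 by positivity)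
    linarith
  have hF := hFE v dtFE hdtFE.le le_rfl
  have hD := hSD v (K * dtFE) (by positivity) le_rfl
  have key : v + (α * (s * dtFE)) • F v + (β * (s * dtFE) ^ 2) • Fd v
      = (1 - α * s - b) • v + (α * s) • (v + dtFE • F v)
        + b • (v + (K * dtFE) ^ 2 • Fd v) := by
    have e : β * (s * dtFE) ^ 2 = b * (K * dtFE) ^ 2 := by
      linear_combination -dtFE ^ 2 * hbK
    rw [e]
    module
  rw [key]
  calc _ ≤ ‖(1 - α * s - b) • v‖ + ‖(α * s) • (v + dtFE • F v)‖
        + ‖b • (v + (K * dtFE) ^ 2 • Fd v)‖ := norm_add₃_le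
    _ = (1 - α * s - b) * ‖v‖ + α * s * ‖v + dtFE • F v‖
        + b * ‖v + (K * dtFE) ^ 2 • Fd v‖ := by
      rw [norm_smul_of_nonneg (by linarith), norm_smul_of_nonneg ha0, norm_smul_of_nonneg hb0]
    _ ≤ (1 - α * s - b) * ‖v‖ + α * s * ‖v‖ + b * ‖v‖ := by gcongr
    _ = ‖v‖ := by ring
end

section
/- Let V be a real normed vector space, F, Ḟ : V → V, Δt_FE > 0 and K > 0. Assume F satisfies the forward Euler condition and Ḟ satisfies the second derivative condition with constant K. Let n ≥ 1, let S, Ŝ be n×n real matrices that are strictly lower triangular (S i j = 0 and Ŝ i j = 0 whenever j ≥ i), let r > 0, and set M = I + r·S + (r²/K²)·Ŝ (M is invertible since it is unit lower triangular). Assume that every entry of the vector M⁻¹·e (where e is the all-ones vector), every entry of the matrix r·M⁻¹·S, and every entry of the matrix (r²/K²)·M⁻¹·Ŝ is nonnegative. Let u ∈ V, let 0 ≤ Δt ≤ r·Δt_FE, and let y : {1,…,n} → V satisfy the stage equations y_i = u + Δt·∑_{j=1}^{n} S_{ij}·F(y_j) + Δt²·∑_{j=1}^{n} Ŝ_{ij}·Ḟ(y_j)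 for every i. Then ‖y_i‖ ≤ ‖u‖ for every i; in particular the final stage y_n (the numerical update u^{n+1}) satisfies ‖y_n‖ ≤ ‖u‖. -/
/-!
Adding `r·S·y + (r²/K²)·Ŝ·y` to both sides of the stage equations gives
`M·y = e·u + r·S·a + (r²/K²)·Ŝ·b`, where `a j = y j + (Δt/r)·F (y j)` and
`b j = y j + (K·Δt/r)²·Ḟ (y j)`. Multiplying by `M⁻¹` yields the Shu–Osher form
`y = (M⁻¹e)·u + P·a + Q·b` with `P = r·M⁻¹S` and `Q = (r²/K²)·M⁻¹Ŝ`.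
The row sums satisfy `M⁻¹e + (P + Q)e = M⁻¹(e + (M - 1)e) = e`, so nonnegativity makes each stage
a convex combination of `u`, the `a j` and the `b j`. The step size restriction gives
`‖a j‖ ≤ ‖y j‖` and `‖b j‖ ≤ ‖y j‖`. Finally `P` and `Q` are strictly lower triangular because `M⁻¹`
is lower triangular (`inv_mul_strictLower`), so only earlier stages contribute and strong induction
on the stage index gives the bound.
-/

/-- Associativity of the matrix action on vectors with entries in a module. -/
lemma sum_smul_sum_smul {V : Type*} [AddCommGroup V] [Module ℝ V] {n : ℕ}
    (A B : Matrix (Fin n) (Fin n) ℝ) (y : Fin n → V) (i : Fin n) :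
    ∑ k, A i k • ∑ j, B k j • y j = ∑ j, (A * B) i j • y j := by
  simp only [Matrix.mul_apply, Finset.sum_smul, Finset.smul_sum, smul_smul]
  exact Finset.sum_comm

lemma isUnit_det_one_add_strictLower {n : ℕ} (N : Matrix (Fin n) (Fin n) ℝ)
    (hN : ∀ i j : Fin n, i ≤ j → N i j = 0) : IsUnit (1 + N).det := by
  have h : (1 + N).BlockTriangular OrderDual.toDual := by
    intro i j hij
    have hij' : i < j := hij
    simp [hN i j hij'.le, Matrix.one_apply_ne hij'.ne]
  rw [Matrix.det_of_isLowerTriangular _ h]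
  simp [hN]

/-- The inverse of a unit lower triangular matrix is lower triangular, hence its product with a
strictly lower triangular matrix is strictly lower triangular. -/
lemma inv_mul_strictLower {n : ℕ} (N T : Matrix (Fin n) (Fin n) ℝ)
    (hN : ∀ i j : Fin n, i ≤ j → N i j = 0) (hT : ∀ i j : Fin n, i ≤ j → T i j = 0)
    (i j : Fin n) (hij : i ≤ j) : ((1 + N)⁻¹ * T) i j = 0 := by
  have h : (1 + N).BlockTriangular OrderDual.toDual := by
    intro i j hij
    have hij' : i < j := hij
    simp [hN i j hij'.le, Matrix.one_apply_ne hij'.ne]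
  have : Invertible (1 + N) :=
    Matrix.invertibleOfIsUnitDet _ (isUnit_det_one_add_strictLower N hN)
  have hinv := Matrix.blockTriangular_inv_of_blockTriangular h
  rw [Matrix.mul_apply]
  refine Finset.sum_eq_zero fun k _ => ?_
  rcases lt_or_ge i k with hk | hk
  · have h0 : (1 + N)⁻¹ i k = 0 := hinv hk
    rw [h0, zero_mul]
  · rw [hT k j (hk.trans hij), mul_zero]

/-- Sufficient SSP conditions for a multistage two-derivative method
in matrix form: if the Shu–Osher arrays `M⁻¹·e`, `r·M⁻¹·S`, `(r²/K²)·M⁻¹·Ŝ`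
(with `M = I + r·S + (r²/K²)·Ŝ`) are entrywise nonnegative, then every stage of the
method is bounded in norm by `‖u‖` for `0 ≤ Δt ≤ r·Δt_FE`. -/
theorem multistage_two_derivative_ssp {V : Type*} [NormedAddCommGroup V] [NormedSpace ℝ V]
    (F Fd : V → V) (dtFE K : ℝ) (hdtFE : 0 < dtFE) (hK : 0 < K)
    (hFE : ∀ v : V, ∀ t : ℝ, 0 ≤ t → t ≤ dtFE → ‖v + t • F v‖ ≤ ‖v‖)
    (hSD : ∀ v : V, ∀ t : ℝ, 0 ≤ t → t ≤ K * dtFE → ‖v + t ^ 2 • Fd v‖ ≤ ‖v‖)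
    (n : ℕ) (hn : 1 ≤ n)
    (S Shat : Matrix (Fin n) (Fin n) ℝ)
    (hS : ∀ i j : Fin n, i ≤ j → S i j = 0)
    (hShat : ∀ i j : Fin n, i ≤ j → Shat i j = 0)
    (r : ℝ) (hr : 0 < r)
    (M : Matrix (Fin n) (Fin n) ℝ)
    (hM : M = 1 + r • S + (r ^ 2 / K ^ 2) • Shat)
    (hRe : ∀ i : Fin n, 0 ≤ M⁻¹.mulVec (fun _ => (1 : ℝ)) i)
    (hP : ∀ i j : Fin n, 0 ≤ (r • (M⁻¹ * S)) i j)
    (hQ : ∀ i j : Fin n, 0 ≤ ((r ^ 2 / K ^ 2) • (M⁻¹ * Shat)) i j)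
    (u : V) (dt : ℝ) (hdt0 : 0 ≤ dt) (hdt : dt ≤ r * dtFE)
    (y : Fin n → V)
    (hy : ∀ i : Fin n,
      y i = u + dt • (∑ j, S i j • F (y j)) + dt ^ 2 • (∑ j, Shat i j • Fd (y j))) :
    ∀ i : Fin n, ‖y i‖ ≤ ‖u‖ := by
  have hN : ∀ i j : Fin n, i ≤ j → (r • S + (r ^ 2 / K ^ 2) • Shat) i j = 0 := by
    intro i j hij
    simp [hS i j hij, hShat i j hij]
  rw [add_assoc] at hM
  have hdet : IsUnit M.det := hM ▸ isUnit_det_one_add_strictLower _ hN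
  have hinv : M⁻¹ * M = 1 := Matrix.nonsing_inv_mul M hdet
  set P := r • (M⁻¹ * S) with hPdef
  set Q := (r ^ 2 / K ^ 2) • (M⁻¹ * Shat) with hQdef
  set R := M⁻¹.mulVec (fun _ => (1 : ℝ)) with hRdef
  have hP0 : ∀ i j : Fin n, i ≤ j → P i j = 0 := by
    intro i j hij
    have := inv_mul_strictLower _ S hN hS i j hij
    rw [← hM] at this
    simp [hPdef, this]
  have hQ0 : ∀ i j : Fin n, i ≤ j → Q i j = 0 := by
    intro i j hij
    have := inv_mul_strictLower _ Shat hN hShat i j hij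
    rw [← hM] at this
    simp [hQdef, this]
  have hPM : M⁻¹ * (r • S) = P := by rw [hPdef, Matrix.mul_smul]
  have hQM : M⁻¹ * ((r ^ 2 / K ^ 2) • Shat) = Q := by rw [hQdef, Matrix.mul_smul]
  have hsplit : M⁻¹ + (P + Q) = 1 := by
    calc M⁻¹ + (P + Q) = M⁻¹ * (1 + (r • S + (r ^ 2 / K ^ 2) • Shat)) := by
          rw [mul_add, mul_add, mul_one, hPM, hQM]
      _ = 1 := by rw [← hM, hinv]
  have hRi : ∀ i, R i = ∑ k, M⁻¹ i k := by
    intro i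
    simp [hRdef, Matrix.mulVec, dotProduct]
  have hrow : ∀ i, R i + ∑ j, P i j + ∑ j, Q i j = 1 := by
    intro i
    rw [hRi, ← Finset.sum_add_distrib, ← Finset.sum_add_distrib]
    have : ∀ j, M⁻¹ i j + P i j + Q i j = (1 : Matrix (Fin n) (Fin n) ℝ) i j := by
      intro j
      rw [← hsplit, Matrix.add_apply, Matrix.add_apply, add_assoc]
    simp [this, Matrix.one_apply]
  set a : Fin n → V := fun j => y j + (dt / r) • F (y j) with ha
  set b : Fin n → V := fun j => y j + (K * (dt / r)) ^ 2 • Fd (y j) with hb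
  have ht0 : 0 ≤ dt / r := by positivity
  have ht1 : dt / r ≤ dtFE := by
    rw [div_le_iff₀ hr]; linarith
  have hna : ∀ j, ‖a j‖ ≤ ‖y j‖ := fun j => hFE _ _ ht0 ht1
  have hnb : ∀ j, ‖b j‖ ≤ ‖y j‖ := fun j =>
    hSD _ _ (by positivity) (mul_le_mul_of_nonneg_left ht1 hK.le)
  have hMy : ∀ k, ∑ j, M k j • y j =
      u + ∑ j, (r • S) k j • a j + ∑ j, ((r ^ 2 / K ^ 2) • Shat) k j • b j := by
    intro k
    have h1 : ∑ j, M k j • y j = y k + ∑ j, (r • S) k j • y j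
        + ∑ j, ((r ^ 2 / K ^ 2) • Shat) k j • y j := by
      rw [hM]
      simp only [Matrix.add_apply, add_smul, Finset.sum_add_distrib, Matrix.one_apply, ite_smul,
        one_smul, zero_smul, Finset.sum_ite_eq, Finset.mem_univ, if_true, add_assoc]
    have h2 : ∑ j, (r • S) k j • a j
        = ∑ j, (r • S) k j • y j + dt • ∑ j, S k j • F (y j) := by
      rw [Finset.smul_sum, ← Finset.sum_add_distrib]
      refine Finset.sum_congr rfl fun j _ => ?_
      rw [ha, smul_add, smul_smul, smul_smul, Matrix.smul_apply, smul_eq_mul]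
      congr 2
      field_simp
    have h3 : ∑ j, ((r ^ 2 / K ^ 2) • Shat) k j • b j
        = ∑ j, ((r ^ 2 / K ^ 2) • Shat) k j • y j + dt ^ 2 • ∑ j, Shat k j • Fd (y j) := by
      rw [Finset.smul_sum, ← Finset.sum_add_distrib]
      refine Finset.sum_congr rfl fun j _ => ?_
      rw [hb, smul_add, smul_smul, smul_smul, Matrix.smul_apply, smul_eq_mul]
      congr 2
      field_simp
    rw [h1, h2, h3]
    nth_rw 1 [hy k]
    abel
  have hSO : ∀ i, y i = R i • u + ∑ j, P i j • a j + ∑ j, Q i j • b j := by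
    intro i
    have h1 : y i = ∑ k, M⁻¹ i k • ∑ j, M k j • y j := by
      rw [sum_smul_sum_smul, hinv]
      simp [Matrix.one_apply]
    rw [h1]
    simp only [hMy, smul_add, Finset.sum_add_distrib]
    rw [sum_smul_sum_smul, sum_smul_sum_smul, hPM, hQM, ← Finset.sum_smul, ← hRi]
  intro i
  induction i using WellFoundedLT.induction with
  | ind i ih =>
  -- Entries with `i ≤ j` vanish, so the induction hypothesis covers every contributing term.
  have bound : ∀ (T : Matrix (Fin n) (Fin n) ℝ) (c : Fin n → V), (∀ j, 0 ≤ T i j) →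
      (∀ j, i ≤ j → T i j = 0) → (∀ j, ‖c j‖ ≤ ‖y j‖) →
      ‖∑ j, T i j • c j‖ ≤ (∑ j, T i j) * ‖u‖ := by
    intro T c hT hT0 hc
    rw [Finset.sum_mul]
    refine norm_sum_le_of_le _ fun j _ => ?_
    rcases lt_or_ge j i with hj | hj
    · rw [norm_smul, Real.norm_of_nonneg (hT j)]
      exact mul_le_mul_of_nonneg_left ((hc j).trans (ih j hj)) (hT j)
    · simp [hT0 j hj]
  calc ‖y i‖ = ‖R i • u + ∑ j, P i j • a j + ∑ j, Q i j • b j‖ := congrArg _ (hSO i)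
    _ ≤ ‖R i • u‖ + ‖∑ j, P i j • a j‖ + ‖∑ j, Q i j • b j‖ := norm_add₃_le
    _ ≤ R i * ‖u‖ + (∑ j, P i j) * ‖u‖ + (∑ j, Q i j) * ‖u‖ := by
        gcongr
        · rw [norm_smul, Real.norm_of_nonneg (hRe i)]
        · exact bound P a (hP i) (hP0 i) hna
        · exact bound Q b (hQ i) (hQ0 i) hnb
    _ = ‖u‖ := by rw [← add_mul, ← add_mul, hrow i, one_mul]
end

section
/- Let V be a real normed vector space, F : V → V and Δt_FE > 0, and assume F satisfies the forward Euler condition. Let s ≥ 1 and let α_{ij}, β_{ij} (1 ≤ i ≤ s, 0 ≤ j ≤ i−1) be nonnegative real numbers with ∑_{j=0}^{i−1} α_{ij} = 1 for every i. Let Δt ≥ 0 satisfy β_{ij}·Δt ≤ α_{ij}·Δt_FE for all i, j (in particular this holds for all Δt ≥ 0 when β_{ij} = 0). Define stages y^{(0)} = u and y^{(i)} = ∑_{j=0}^{i−1} ( α_{ij}·y^{(j)} + Δt·β_{ij}·F(y^{(j)}) ) for i = 1, …, s. Then ‖y^{(i)}‖ ≤ ‖u‖ for every i = 0, 1, …,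 s; in particular the update u^{n+1} = y^{(s)} satisfies ‖u^{n+1}‖ ≤ ‖u‖. -/
/-!
Each summand `a • v + b • F v` of a stage, with `0 ≤ b ≤ a * h`, is `a` times the forward Euler
step of size `b / a ≤ h`, so its norm is at most `a * ‖v‖` (`norm_smul_add_smul_le`). A stage is
therefore bounded by a convex combination of the norms of the earlier stages, and strong induction
on the stage index gives the bound by `‖u‖`.
-/

/-- A scaled forward Euler step. If `a = 0`, the step restriction forces `b = 0` as well. -/
theorem norm_smul_add_smul_le {V : Type*} [NormedAddCommGroup V] [NormedSpace ℝ V]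
    {F : V → V} {h : ℝ} (hFE : ∀ v : V, ∀ t : ℝ, 0 ≤ t → t ≤ h → ‖v + t • F v‖ ≤ ‖v‖)
    {a b : ℝ} (ha : 0 ≤ a) (hb : 0 ≤ b) (hab : b ≤ a * h) (v : V) :
    ‖a • v + b • F v‖ ≤ a * ‖v‖ := by
  rcases ha.eq_or_lt with rfl | ha'
  · have hb0 : b = 0 := le_antisymm (by simpa using hab) hb
    simp [hb0]
  · have hfactor : a • v + b • F v = a • (v + (b / a) • F v) := by
      rw [smul_add, smul_smul, mul_div_cancel₀ b ha'.ne']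
    rw [hfactor, norm_smul, Real.norm_of_nonneg ha]
    have hstep : b / a ≤ h := (div_le_iff₀' ha').2 hab
    exact mul_le_mul_of_nonneg_left (hFE v _ (div_nonneg hb ha) hstep) ha

/-- An explicit Runge–Kutta method in Shu–Osher form with nonnegative
coefficients `α_{ij}, β_{ij}`, consistency `∑_j α_{ij} = 1`, and time step satisfying
`β_{ij}·Δt ≤ α_{ij}·Δt_FE`, preserves the strong stability of the forward Euler method:
every stage satisfies `‖y⁽ⁱ⁾‖ ≤ ‖u‖`. -/
theorem shu_osher_rk_ssp {V : Type*} [NormedAddCommGroup V] [NormedSpace ℝ V]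
    (F : V → V) (dtFE : ℝ) (hdtFE : 0 < dtFE)
    (hFE : ∀ v : V, ∀ t : ℝ, 0 ≤ t → t ≤ dtFE → ‖v + t • F v‖ ≤ ‖v‖)
    (s : ℕ) (hs : 1 ≤ s) (α β : ℕ → ℕ → ℝ)
    (hα : ∀ i j : ℕ, 1 ≤ i → i ≤ s → j < i → 0 ≤ α i j)
    (hβ : ∀ i j : ℕ, 1 ≤ i → i ≤ s → j < i → 0 ≤ β i j)
    (hsum : ∀ i : ℕ, 1 ≤ i → i ≤ s → ∑ j ∈ Finset.range i, α i j = 1)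
    (dt : ℝ) (hdt0 : 0 ≤ dt)
    (hdt : ∀ i j : ℕ, 1 ≤ i → i ≤ s → j < i → β i j * dt ≤ α i j * dtFE)
    (u : V) (y : ℕ → V) (hy0 : y 0 = u)
    (hy : ∀ i : ℕ, 1 ≤ i → i ≤ s →
      y i = ∑ j ∈ Finset.range i, (α i j • y j + (dt * β i j) • F (y j))) :
    ∀ i : ℕ, i ≤ s → ‖y i‖ ≤ ‖u‖ := by
  intro i
  induction i using Nat.strong_induction_on with
  | _ i ih =>
    intro his
    rcases Nat.eq_zero_or_pos i with rfl | hi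
    · rw [hy0]
    · calc ‖y i‖ ≤ ∑ j ∈ Finset.range i, α i j * ‖u‖ := by
            rw [hy i hi his]
            refine norm_sum_le_of_le _ fun j hj => ?_
            have hji : j < i := Finset.mem_range.1 hj
            have hαij := hα i j hi his hji
            have hβij := hβ i j hi his hji
            have hstep : dt * β i j ≤ α i j * dtFE := by
              rw [mul_comm]
              exact hdt i j hi his hji
            exact (norm_smul_add_smul_le hFE hαij (mul_nonneg hdt0 hβij) hstep (y j)).trans
              (mul_le_mul_of_nonneg_left (ih j hji (hji.le.trans his)) hαij)
        _ = ‖u‖ := by rw [← Finset.sum_mul, hsum i hi his, one_mul]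
end

section
/- Let u : ℤ → ℝ and let 0 ≤ λ ≤ 1. Define the first-order upwind forward Euler update u'_j = u_j + λ·(u_{j+1} − u_j) for all j ∈ ℤ. Then ‖u'‖_TV ≤ ‖u‖_TV, i.e., the scheme is total variation diminishing. -/
/-!
Each increment of the update is a convex combination of two neighbouring increments,
`u'_{j+1} − u'_j = (1 − λ)(u_{j+1} − u_j) + λ(u_{j+2} − u_{j+1})`. Taking absolute values, summing
over `ℤ` and using that the sum is invariant under the shift `j ↦ j + 1` gives the bound. The sums
live in `[0, ∞]`, so no summability is needed.
-/

/-- The first-order upwind forward Euler scheme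
`u'_j = u_j + λ·(u_{j+1} − u_j)` is total variation diminishing for `0 ≤ λ ≤ 1`. -/
theorem upwind_forward_euler_tvd (u u' : ℤ → ℝ) (lam : ℝ)
    (h0 : 0 ≤ lam) (h1 : lam ≤ 1)
    (hu' : ∀ j : ℤ, u' j = u j + lam * (u (j + 1) - u j)) :
    (∑' j : ℤ, ENNReal.ofReal |u' (j + 1) - u' j|) ≤
      ∑' j : ℤ, ENNReal.ofReal |u (j + 1) - u j| := by
  have h1' : 0 ≤ 1 - lam := sub_nonneg.mpr h1
  have key : ∀ j : ℤ, ENNReal.ofReal |u' (j + 1) - u' j| ≤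
      ENNReal.ofReal (1 - lam) * ENNReal.ofReal |u (j + 1) - u j| +
        ENNReal.ofReal lam * ENNReal.ofReal |u (j + 1 + 1) - u (j + 1)| := by
    intro j
    rw [← ENNReal.ofReal_mul h1', ← ENNReal.ofReal_mul h0,
      ← ENNReal.ofReal_add (by positivity) (by positivity)]
    apply ENNReal.ofReal_le_ofReal
    calc |u' (j + 1) - u' j|
        = |(1 - lam) * (u (j + 1) - u j) + lam * (u (j + 1 + 1) - u (j + 1))| := by
          rw [hu', hu']; ring_nf
      _ ≤ |(1 - lam) * (u (j + 1) - u j)| + |lam * (u (j + 1 + 1) - u (j + 1))| :=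
          abs_add_le _ _
      _ = _ := by rw [abs_mul, abs_mul, abs_of_nonneg h1', abs_of_nonneg h0]
  have shift : ∑' j : ℤ, ENNReal.ofReal |u (j + 1 + 1) - u (j + 1)| =
      ∑' j : ℤ, ENNReal.ofReal |u (j + 1) - u j| :=
    (Equiv.addRight (1 : ℤ)).tsum_eq fun j => ENNReal.ofReal |u (j + 1) - u j|
  refine (ENNReal.tsum_le_tsum key).trans_eq ?_
  rw [ENNReal.tsum_add, ENNReal.tsum_mul_left, ENNReal.tsum_mul_left, shift, ← add_mul,
    ← ENNReal.ofReal_add h1' h0, sub_add_cancel, ENNReal.ofReal_one, one_mul]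
end

section
/- Let u : ℤ → ℝ and let 0 ≤ λ ≤ √2/2. Define the centered second-difference update u'_j = u_j + λ²·(u_{j+1} − 2u_j + u_{j−1}) for all j ∈ ℤ. Then ‖u'‖_TV ≤ ‖u‖_TV, i.e., the scheme is total variation diminishing. -/
/-! With `d j = u (j + 1) - u j` and `c = λ² ∈ [0, 1/2]`, the differences of the updated sequence
are the convex combinations `(1 - 2c) d j + c d (j + 1) + c d (j - 1)`. Taking absolute values and
summing over `ℤ`, shift invariance turns the bound into `(1 - 2c) + c + c = 1` times the total
variation of `u`. Everything is done in `[0, ∞]`, so no summability is needed. -/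

/-- The centered second-difference scheme
`u'_j = u_j + λ²·(u_{j+1} − 2u_j + u_{j−1})` is total variation diminishing
for `0 ≤ λ ≤ √2/2`. -/
theorem second_difference_tvd (u u' : ℤ → ℝ) (lam : ℝ)
    (h0 : 0 ≤ lam) (h1 : lam ≤ Real.sqrt 2 / 2)
    (hu' : ∀ j : ℤ, u' j = u j + lam ^ 2 * (u (j + 1) - 2 * u j + u (j - 1))) :
    (∑' j : ℤ, ENNReal.ofReal |u' (j + 1) - u' j|) ≤
      ∑' j : ℤ, ENNReal.ofReal |u (j + 1) - u j| := by
  obtain ⟨c, hc⟩ : ∃ c, c = lam ^ 2 := ⟨_, rfl⟩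
  have hc0 : 0 ≤ c := hc ▸ sq_nonneg lam
  have hc1 : 0 ≤ 1 - 2 * c := by
    have hs : Real.sqrt 2 ^ 2 = 2 := Real.sq_sqrt (by norm_num)
    have : lam ^ 2 ≤ (Real.sqrt 2 / 2) ^ 2 := pow_le_pow_left₀ h0 h1 2
    rw [div_pow, hs] at this
    linarith
  let g : ℤ → ENNReal := fun j => ENNReal.ofReal |u (j + 1) - u j|
  have key : ∀ j : ℤ, ENNReal.ofReal |u' (j + 1) - u' j| ≤
      ENNReal.ofReal (1 - 2 * c) * g j + ENNReal.ofReal c * g (j + 1)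
        + ENNReal.ofReal c * g (j - 1) := by
    intro j
    simp only [g]
    rw [← ENNReal.ofReal_mul hc1, ← ENNReal.ofReal_mul hc0, ← ENNReal.ofReal_mul hc0,
      ← ENNReal.ofReal_add (by positivity) (by positivity),
      ← ENNReal.ofReal_add (by positivity) (by positivity)]
    apply ENNReal.ofReal_le_ofReal
    have e : u' (j + 1) - u' j = (1 - 2 * c) * (u (j + 1) - u j)
        + c * (u (j + 1 + 1) - u (j + 1)) + c * (u (j - 1 + 1) - u (j - 1)) := by
      rw [hu', hu', ← hc, add_sub_cancel_right, sub_add_cancel]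
      ring
    rw [e]
    refine (abs_add_three _ _ _).trans_eq ?_
    rw [abs_mul, abs_mul, abs_mul, abs_of_nonneg hc1, abs_of_nonneg hc0]
  calc (∑' j : ℤ, ENNReal.ofReal |u' (j + 1) - u' j|)
      ≤ ∑' j : ℤ, (ENNReal.ofReal (1 - 2 * c) * g j + ENNReal.ofReal c * g (j + 1)
        + ENNReal.ofReal c * g (j - 1)) := ENNReal.tsum_le_tsum key
    _ = ENNReal.ofReal (1 - 2 * c) * (∑' j, g j) + ENNReal.ofReal c * (∑' j, g j)
        + ENNReal.ofReal c * (∑' j, g j) := by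
      have s1 : ∑' j, g (j + 1) = ∑' j, g j := (Equiv.addRight (1 : ℤ)).tsum_eq g
      have s2 : ∑' j, g (j - 1) = ∑' j, g j := (Equiv.subRight (1 : ℤ)).tsum_eq g
      rw [ENNReal.tsum_add, ENNReal.tsum_add, ENNReal.tsum_mul_left, ENNReal.tsum_mul_left,
        ENNReal.tsum_mul_left, s1, s2]
    _ = ∑' j, g j := by
      rw [← add_mul, ← add_mul, ← ENNReal.ofReal_add hc1 hc0,
        ← ENNReal.ofReal_add (by linarith) hc0]
      have : 1 - 2 * c + c + c = 1 := by ring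
      rw [this, ENNReal.ofReal_one, one_mul]
end

section
/- Let α ≥ 0 and β > 0 be real numbers, let u : ℤ → ℝ, and let λ satisfy 0 ≤ λ ≤ (√(α² + 8β) − α)/(4β). Define the two-derivative building block update u'_j = u_j + α·λ·(u_{j+1} − u_j) + β·λ²·(u_{j+1} − 2u_j + u_{j−1}) for all j ∈ ℤ. Then ‖u'‖_TV ≤ ‖u‖_TV, i.e., the scheme is total variation diminishing. -/
/-!
Put `a = αλ`, `b = βλ²` and `d j = u (j + 1) - u j`. The differences of the update are
`(1 - a - 2b) d j + (a + b) d (j + 1) + b d (j - 1)`. The step-size bound says that `λ` is at most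
the positive root of `2βx² + αx - 1`, i.e. `a + 2b ≤ 1`, so this is a convex combination.
Taking absolute values and summing over `j`, the sum being invariant under shifts of `ℤ`,
gives the claim. All sums are taken in `[0, ∞]`, so no summability is needed.
-/

/-- The step-size restriction says exactly that the coefficient of `u j` is nonnegative. -/
lemma step_size_quadratic (α β lam : ℝ) (hα : 0 ≤ α) (hβ : 0 < β) (h0 : 0 ≤ lam)
    (h1 : lam ≤ (Real.sqrt (α ^ 2 + 8 * β) - α) / (4 * β)) :
    α * lam + 2 * (β * lam ^ 2) ≤ 1 := by
  rw [le_div_iff₀ (by positivity)] at h1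
  have hs : (lam * (4 * β) + α) ^ 2 ≤ α ^ 2 + 8 * β :=
    (Real.le_sqrt (by positivity) (by positivity)).1 (by linarith)
  -- `hs` is the claim multiplied by `8β`.
  have h8 : 8 * β * (α * lam + 2 * (β * lam ^ 2)) ≤ 8 * β * 1 := by nlinarith
  exact le_of_mul_le_mul_left h8 (by positivity)

/-- The two-derivative building block scheme
`u'_j = u_j + αλ·(u_{j+1} − u_j) + βλ²·(u_{j+1} − 2u_j + u_{j−1})` is total variation
diminishing for `0 ≤ λ ≤ (√(α² + 8β) − α)/(4β)`. -/
theorem building_block_tvd (α β : ℝ) (hα : 0 ≤ α) (hβ : 0 < β)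
    (u u' : ℤ → ℝ) (lam : ℝ)
    (h0 : 0 ≤ lam) (h1 : lam ≤ (Real.sqrt (α ^ 2 + 8 * β) - α) / (4 * β))
    (hu' : ∀ j : ℤ, u' j = u j + α * lam * (u (j + 1) - u j)
      + β * lam ^ 2 * (u (j + 1) - 2 * u j + u (j - 1))) :
    (∑' j : ℤ, ENNReal.ofReal |u' (j + 1) - u' j|) ≤
      ∑' j : ℤ, ENNReal.ofReal |u (j + 1) - u j| := by
  have hq := step_size_quadratic α β lam hα hβ h0 h1
  have ha : 0 ≤ α * lam := by positivity
  have hb : 0 ≤ β * lam ^ 2 := by positivity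
  generalize α * lam = a at *
  generalize β * lam ^ 2 = b at *
  have hc : 0 ≤ 1 - a - 2 * b := by linarith
  have hab : 0 ≤ a + b := by linarith
  set D : ℤ → ENNReal := fun j => ENNReal.ofReal |u (j + 1) - u j| with hD
  have key : ∀ j : ℤ, ENNReal.ofReal |u' (j + 1) - u' j| ≤
      ENNReal.ofReal (1 - a - 2 * b) * D j + ENNReal.ofReal (a + b) * D (j + 1)
        + ENNReal.ofReal b * D (j - 1) := by
    intro j
    simp only [hD]
    rw [← ENNReal.ofReal_mul hc, ← ENNReal.ofReal_mul hab, ← ENNReal.ofReal_mul hb,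
      ← ENNReal.ofReal_add (by positivity) (by positivity),
      ← ENNReal.ofReal_add (by positivity) (by positivity)]
    apply ENNReal.ofReal_le_ofReal
    have e : u' (j + 1) - u' j = (1 - a - 2 * b) * (u (j + 1) - u j)
        + (a + b) * (u (j + 1 + 1) - u (j + 1)) + b * (u (j - 1 + 1) - u (j - 1)) := by
      rw [hu', hu', add_sub_cancel_right, sub_add_cancel]
      ring
    rw [e]
    refine (abs_add_three _ _ _).trans_eq ?_
    rw [abs_mul, abs_mul, abs_mul, abs_of_nonneg hc, abs_of_nonneg hab, abs_of_nonneg hb]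
  have s1 : ∑' j : ℤ, D (j + 1) = ∑' j, D j := (Equiv.addRight (1 : ℤ)).tsum_eq D
  have s2 : ∑' j : ℤ, D (j - 1) = ∑' j, D j := (Equiv.subRight (1 : ℤ)).tsum_eq D
  refine (ENNReal.tsum_le_tsum key).trans_eq ?_
  rw [ENNReal.tsum_add, ENNReal.tsum_add, ENNReal.tsum_mul_left, ENNReal.tsum_mul_left,
    ENNReal.tsum_mul_left, s1, s2, ← add_mul, ← add_mul, ← ENNReal.ofReal_add hc hab,
    ← ENNReal.ofReal_add (by positivity) hb,
    show 1 - a - 2 * b + (a + b) + b = 1 by ring, ENNReal.ofReal_one, one_mul]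
end

section
/- Let V be a real normed vector space, F, Ḟ : V → V, Δt_FE > 0 and K > 0. Assume F satisfies the forward Euler condition and Ḟ satisfies the second derivative condition with constant K. Then the second-order Taylor series method is SSP with coefficient C = K·√(K²+2) − K²: for every v ∈ V and every Δt with 0 ≤ Δt ≤ (K·√(K²+2) − K²)·Δt_FE, one has ‖v + Δt·F(v) + (Δt²/2)·Ḟ(v)‖ ≤ ‖v‖. -/
/-!
With `a = Δt / Δt_FE` and `b = a² / (2K²)`, the Taylor step is the combination
`(1 - a - b) v + a (v + Δt_FE F(v)) + b (v + (K Δt_FE)² Ḟ(v))`, in which each vector has norm at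
most `‖v‖`. The combination is convex exactly when `a + b ≤ 1`, i.e. `(a + K²)² ≤ K² (K² + 2)`,
which is the bound `a ≤ K √(K² + 2) - K²`.
-/

/-- The second-order Taylor series method
`u ↦ u + Δt·F(u) + (Δt²/2)·Ḟ(u)` is SSP with coefficient `C = K·√(K²+2) − K²`. -/
theorem taylor_series_ssp {V : Type*} [NormedAddCommGroup V] [NormedSpace ℝ V]
    (F Fd : V → V) (dtFE K : ℝ) (hdtFE : 0 < dtFE) (hK : 0 < K)
    (hFE : ∀ v : V, ∀ t : ℝ, 0 ≤ t → t ≤ dtFE → ‖v + t • F v‖ ≤ ‖v‖)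
    (hSD : ∀ v : V, ∀ t : ℝ, 0 ≤ t → t ≤ K * dtFE → ‖v + t ^ 2 • Fd v‖ ≤ ‖v‖) :
    ∀ v : V, ∀ dt : ℝ, 0 ≤ dt →
      dt ≤ (K * Real.sqrt (K ^ 2 + 2) - K ^ 2) * dtFE →
      ‖v + dt • F v + (dt ^ 2 / 2) • Fd v‖ ≤ ‖v‖ := by
  intro v dt h0 hle
  obtain ⟨a, rfl⟩ : ∃ a, dt = a * dtFE := ⟨dt / dtFE, by field_simp⟩
  have ha : 0 ≤ a := nonneg_of_mul_nonneg_left h0 hdtFE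
  have haC : a + K ^ 2 ≤ K * Real.sqrt (K ^ 2 + 2) := by
    linarith [le_of_mul_le_mul_right hle hdtFE]
  have hsq : (a + K ^ 2) ^ 2 ≤ K ^ 2 * (K ^ 2 + 2) := by
    calc (a + K ^ 2) ^ 2 ≤ (K * Real.sqrt (K ^ 2 + 2)) ^ 2 :=
          pow_le_pow_left₀ (by positivity) haC 2
      _ = K ^ 2 * (K ^ 2 + 2) := by rw [mul_pow, Real.sq_sqrt (by positivity)]
  obtain ⟨b, hb⟩ : ∃ b, b = a ^ 2 / (2 * K ^ 2) := ⟨_, rfl⟩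
  have hb0 : 0 ≤ b := by rw [hb]; positivity
  have hbK : b * K ^ 2 = a ^ 2 / 2 := by rw [hb]; field_simp
  have hab : 0 ≤ 1 - a - b := by
    have hK2 : 0 < K ^ 2 := by positivity
    refine nonneg_of_mul_nonneg_left (b := K ^ 2) ?_ hK2
    linarith
  have hconv : v + (a * dtFE) • F v + ((a * dtFE) ^ 2 / 2) • Fd v =
      (1 - a - b) • v + a • (v + dtFE • F v) + b • (v + (K * dtFE) ^ 2 • Fd v) := by
    have hcoef : (a * dtFE) ^ 2 / 2 = b * (K * dtFE) ^ 2 := by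
      linear_combination (-dtFE ^ 2) * hbK
    rw [hcoef]
    module
  have hF := hFE v dtFE hdtFE.le le_rfl
  have hD := hSD v (K * dtFE) (by positivity) le_rfl
  rw [hconv]
  calc _ ≤ ‖(1 - a - b) • v‖ + ‖a • (v + dtFE • F v)‖ + ‖b • (v + (K * dtFE) ^ 2 • Fd v)‖ :=
        norm_add₃_le
    _ = (1 - a - b) * ‖v‖ + a * ‖v + dtFE • F v‖ + b * ‖v + (K * dtFE) ^ 2 • Fd v‖ := by
        rw [norm_smul_of_nonneg hab, norm_smul_of_nonneg ha, norm_smul_of_nonneg hb0]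
    _ ≤ (1 - a - b) * ‖v‖ + a * ‖v‖ + b * ‖v‖ := by gcongr
    _ = ‖v‖ := by ring
end

section
/- Let V be a real normed vector space, F, Ḟ : V → V, Δt_FE > 0 and K > 0. Assume F satisfies the forward Euler condition and Ḟ satisfies the second derivative condition with constant K. Define the half-step Taylor map T(v) = v + (Δt/2)·F(v) + (Δt²/8)·Ḟ(v). Then the two-stage method u* = T(u), u^{n+1} = u* + (Δt/2)·F(u*) + (Δt²/8)·Ḟ(u*) (two Taylor series steps of size Δt/2) satisfies ‖u^{n+1}‖ ≤ ‖u‖ for every u ∈ V and every Δt with 0 ≤ Δt ≤ (2K·√(K²+2) − 2K²)·Δt_FE. -/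
/-!
A single half-step Taylor map is already norm non-increasing. With `x = Δt / Δt_FE`, `a = x / 2` and
`b = x² / (8K²)`, it is the combination
`T v = (1 - a - b) v + a (v + Δt_FE F v) + b (v + (K Δt_FE)² Ḟ v)`,
which is convex exactly when `a + b ≤ 1`, i.e. `(x + 2K²)² ≤ 4K²(K² + 2)`; this is the bound assumed
on `Δt`. Applying the estimate twice gives the theorem.
-/

/-- Two Taylor series steps of size `Δt/2` form a two-stage
second-order method which is SSP with coefficient `2K·√(K²+2) − 2K²`. -/
theorem double_taylor_ssp {V : Type*} [NormedAddCommGroup V] [NormedSpace ℝ V]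
    (F Fd : V → V) (dtFE K : ℝ) (hdtFE : 0 < dtFE) (hK : 0 < K)
    (hFE : ∀ v : V, ∀ t : ℝ, 0 ≤ t → t ≤ dtFE → ‖v + t • F v‖ ≤ ‖v‖)
    (hSD : ∀ v : V, ∀ t : ℝ, 0 ≤ t → t ≤ K * dtFE → ‖v + t ^ 2 • Fd v‖ ≤ ‖v‖)
    (dt : ℝ) (hdt0 : 0 ≤ dt)
    (hdt : dt ≤ (2 * K * Real.sqrt (K ^ 2 + 2) - 2 * K ^ 2) * dtFE)
    (T : V → V)
    (hT : ∀ v : V, T v = v + (dt / 2) • F v + (dt ^ 2 / 8) • Fd v) :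
    ∀ u : V, ‖T (T u)‖ ≤ ‖u‖ := by
  have hstep : ∀ v : V, ‖T v‖ ≤ ‖v‖ := by
    intro v
    obtain ⟨x, rfl⟩ : ∃ x, dt = x * dtFE := ⟨dt / dtFE, by field_simp⟩
    have hx0 : 0 ≤ x := nonneg_of_mul_nonneg_left hdt0 hdtFE
    have hx : x ≤ 2 * K * Real.sqrt (K ^ 2 + 2) - 2 * K ^ 2 := le_of_mul_le_mul_right hdt hdtFE
    have hquad : x ^ 2 + 4 * K ^ 2 * x ≤ 8 * K ^ 2 := by
      have hsq : Real.sqrt (K ^ 2 + 2) ^ 2 = K ^ 2 + 2 := Real.sq_sqrt (by positivity)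
      have h : (x + 2 * K ^ 2) ^ 2 ≤ (2 * K * Real.sqrt (K ^ 2 + 2)) ^ 2 :=
        pow_le_pow_left₀ (by positivity) (by linarith) 2
      rw [mul_pow, hsq] at h
      linarith
    obtain ⟨a, ha⟩ : ∃ a, a = x / 2 := ⟨_, rfl⟩
    obtain ⟨b, hb⟩ : ∃ b, b = x ^ 2 / (8 * K ^ 2) := ⟨_, rfl⟩
    have ha0 : 0 ≤ a := by rw [ha]; positivity
    have hb0 : 0 ≤ b := by rw [hb]; positivity
    have hab : 0 ≤ 1 - a - b := by
      have h : b ≤ 1 - a := by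
        rw [hb, ha, div_le_iff₀ (by positivity)]
        linarith
      linarith
    have hbK : b * (K * dtFE) ^ 2 = (x * dtFE) ^ 2 / 8 := by
      rw [hb]; field_simp
    have haF : a * dtFE = x * dtFE / 2 := by rw [ha]; ring
    have hconv : T v = (1 - a - b) • v + a • (v + dtFE • F v)
        + b • (v + (K * dtFE) ^ 2 • Fd v) := by
      rw [hT, ← hbK, ← haF]
      module
    have h1 := hFE v dtFE hdtFE.le le_rfl
    have h2 := hSD v (K * dtFE) (by positivity) le_rfl
    calc ‖T v‖ ≤ (1 - a - b) * ‖v‖ + a * ‖v + dtFE • F v‖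
          + b * ‖v + (K * dtFE) ^ 2 • Fd v‖ := by
          rw [hconv]
          refine norm_add₃_le.trans_eq ?_
          rw [norm_smul_of_nonneg hab, norm_smul_of_nonneg ha0, norm_smul_of_nonneg hb0]
      _ ≤ (1 - a - b) * ‖v‖ + a * ‖v‖ + b * ‖v‖ := by gcongr
      _ = ‖v‖ := by ring
  exact fun u => (hstep (T u)).trans (hstep u)
end

section
/- Let V be a real normed vector space, F, Ḟ : V → V, Δt_FE > 0 and K > 0. Assume F satisfies the forward Euler condition and Ḟ satisfies the second derivative condition with constant K. Set r = (1 − K² + √(1 + 6K² + K⁴))/2. Then the two-stage second-order method u* = u + (Δt/r)·F(u), u^{n+1} = u + (Δt/2)·(F(u) + F(u*)) + ((r−1)/(2r))·Δt²·Ḟ(u) satisfies ‖u^{n+1}‖ ≤ ‖u‖ for every u ∈ V and every Δt with 0 ≤ Δt ≤ r·Δt_FE. -/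
/-!
Squaring the definition of `r` gives `r (r - 1) = K² (2 - r)`, and `1 < r < 2`. With `s = dt / r`,
so that `0 ≤ s ≤ dtFE`, the update is then the convex combination
`unew = (r / 2) (ustar + s F(ustar)) + (1 - r / 2) (u + (K s)² Fd(u))`:
the `F u` contributions cancel. Both bracketed terms have norm at most `‖u‖`, by the
forward Euler condition (applied twice) and by the second derivative condition.
-/

/-- The optimal two-stage second-order two-derivative method with
`r = (1 − K² + √(1 + 6K² + K⁴))/2` is SSP with coefficient `r`. -/
theorem two_stage_second_order_ssp {V : Type*} [NormedAddCommGroup V] [NormedSpace ℝ V]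
    (F Fd : V → V) (dtFE K : ℝ) (hdtFE : 0 < dtFE) (hK : 0 < K)
    (hFE : ∀ v : V, ∀ t : ℝ, 0 ≤ t → t ≤ dtFE → ‖v + t • F v‖ ≤ ‖v‖)
    (hSD : ∀ v : V, ∀ t : ℝ, 0 ≤ t → t ≤ K * dtFE → ‖v + t ^ 2 • Fd v‖ ≤ ‖v‖)
    (r : ℝ) (hr : r = (1 - K ^ 2 + Real.sqrt (1 + 6 * K ^ 2 + K ^ 4)) / 2)
    (u ustar unew : V) (dt : ℝ) (hdt0 : 0 ≤ dt) (hdt : dt ≤ r * dtFE)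
    (hstar : ustar = u + (dt / r) • F u)
    (hnew : unew = u + (dt / 2) • (F u + F ustar)
      + ((r - 1) / (2 * r) * dt ^ 2) • Fd u) :
    ‖unew‖ ≤ ‖u‖ := by
  have hsq := Real.sq_sqrt (show (0 : ℝ) ≤ 1 + 6 * K ^ 2 + K ^ 4 by positivity)
  have hw0 := Real.sqrt_nonneg (1 + 6 * K ^ 2 + K ^ 4)
  set w := Real.sqrt (1 + 6 * K ^ 2 + K ^ 4)
  have hK2 : 0 < K ^ 2 := by positivity
  have hquad : r * (r - 1) = K ^ 2 * (2 - r) := by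
    rw [hr]; linear_combination hsq / 4
  have hr1 : 1 < r := by
    have : 1 + K ^ 2 < w := by nlinarith
    linarith
  have hr2 : r < 2 := by
    have : w < 3 + K ^ 2 := by nlinarith
    linarith
  have hr0 : 0 < r := by linarith
  obtain ⟨s, hs⟩ : ∃ s, s = dt / r := ⟨_, rfl⟩
  have hdts : dt = r * s := by rw [hs]; field_simp
  have hs0 : 0 ≤ s := by rw [hs]; positivity
  have hs1 : s ≤ dtFE := by
    rw [hdts] at hdt
    exact le_of_mul_le_mul_left hdt hr0
  rw [← hs] at hstar
  have hA : ‖ustar + s • F ustar‖ ≤ ‖u‖ := by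
    refine (hFE ustar s hs0 hs1).trans ?_
    rw [hstar]
    exact hFE u s hs0 hs1
  have hB : ‖u + (K * s) ^ 2 • Fd u‖ ≤ ‖u‖ :=
    hSD u (K * s) (by positivity) (by gcongr)
  have hcoef : (r - 1) / (2 * r) * dt ^ 2 = (1 - r / 2) * (K * s) ^ 2 := by
    rw [hdts]
    field_simp
    linear_combination s ^ 2 * hquad
  have hdecomp : unew = (r / 2) • (ustar + s • F ustar)
      + (1 - r / 2) • (u + (K * s) ^ 2 • Fd u) := by
    rw [hnew, hcoef, hdts]
    -- Only the free-standing `ustar` is expanded; `F ustar` is treated as an atom.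
    generalize F ustar = G
    rw [hstar]
    module
  calc ‖unew‖ ≤ ‖(r / 2) • (ustar + s • F ustar)‖
        + ‖(1 - r / 2) • (u + (K * s) ^ 2 • Fd u)‖ := by
        rw [hdecomp]; exact norm_add_le _ _
    _ = (r / 2) * ‖ustar + s • F ustar‖ + (1 - r / 2) * ‖u + (K * s) ^ 2 • Fd u‖ := by
        rw [norm_smul_of_nonneg (by linarith), norm_smul_of_nonneg (by linarith)]
    _ ≤ (r / 2) * ‖u‖ + (1 - r / 2) * ‖u‖ := by
        have : 0 ≤ 1 - r / 2 := by linarith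
        gcongr
    _ = ‖u‖ := by ring
end

section
/- Let a, â, b₁, b₂, b̂₁, b̂₂ be real numbers satisfying the order conditions through order four of an explicit two-stage two-derivative Runge–Kutta method: b₁ + b₂ = 1; a·b₂ + b̂₁ + b̂₂ = 1/2; a²·b₂ + 2a·b̂₂ = 1/3; â·b₂ + a·b̂₂ = 1/6; a³·b₂ + 3a²·b̂₂ = 1/4; a·â·b₂ + a²·b̂₂ + â·b̂₂ = 1/8; a²·b̂₂ = 1/12; â·b̂₂ = 1/24. Then necessarily a = 1/2, â = 1/8, b₁ = 1, b₂ = 0, b̂₁ = 1/6 and b̂₂ = 1/3; that is, the two-stage fourth-order two-derivative method u* = u + (Δt/2)F(u) + (Δt²/8)Ḟ(u), u^{n+1} = u + ΔtF(u) + (Δt²/6)(Ḟ(u) + 2Ḟ(u*)) is the unique such method. -/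
/-!
The condition `a² b̂₂ = 1/12` gives `a ≠ 0`, and together with `a³ b₂ + 3 a² b̂₂ = 1/4` it gives
`a³ b₂ = 0`, hence `b₂ = 0`. The third-order condition then reduces to `a b̂₂ = 1/6`; comparison
with `a² b̂₂ = 1/12` yields `a = 1/2`, and every remaining coefficient is fixed linearly.
-/

/-- Uniqueness of the explicit two-stage fourth-order
two-derivative Runge–Kutta method: the order conditions through order four force
`a = 1/2`, `â = 1/8`, `b₁ = 1`, `b₂ = 0`, `b̂₁ = 1/6`, `b̂₂ = 1/3`. -/
theorem two_stage_fourth_order_unique (a ahat b1 b2 bh1 bh2 : ℝ)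
    (h1 : b1 + b2 = 1)
    (h2 : a * b2 + bh1 + bh2 = 1 / 2)
    (h3 : a ^ 2 * b2 + 2 * a * bh2 = 1 / 3)
    (h4 : ahat * b2 + a * bh2 = 1 / 6)
    (h5 : a ^ 3 * b2 + 3 * a ^ 2 * bh2 = 1 / 4)
    (h6 : a * ahat * b2 + a ^ 2 * bh2 + ahat * bh2 = 1 / 8)
    (h7 : a ^ 2 * bh2 = 1 / 12)
    (h8 : ahat * bh2 = 1 / 24) :
    a = 1 / 2 ∧ ahat = 1 / 8 ∧ b1 = 1 ∧ b2 = 0 ∧ bh1 = 1 / 6 ∧ bh2 = 1 / 3 := by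
  have ha : a ≠ 0 := by
    rintro rfl
    norm_num at h7
  -- Subtracting three times `h7` from `h5` leaves `a ^ 3 * b2 = 0`.
  have hb2 : b2 = 0 := by
    have h : a ^ 3 * b2 = 0 := by linarith
    exact (mul_eq_zero.mp h).resolve_left (pow_ne_zero 3 ha)
  subst hb2
  have hab : a * bh2 = 1 / 6 := by linarith
  -- `h7` now reads `a * (1 / 6) = 1 / 12`.
  have ha_half : a = 1 / 2 := by
    have h : a ^ 2 * bh2 = a * (a * bh2) := by ring
    rw [hab] at h
    linarith
  subst ha_half
  have hbh2 : bh2 = 1 / 3 := by linarith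
  subst hbh2
  refine ⟨rfl, ?_, ?_, rfl, ?_, rfl⟩ <;> linarith
end

section
/- Let a₂₁ be a real number with a₂₁ ∉ {0, 1/2, 3/5}, and define a₃₁ = (3/5 − a₂₁)/(1 − 2a₂₁), â₂₁ = a₂₁²/2, â₃₂ = (1/10)·( (3/5 − a₂₁)²/(a₂₁·(1 − 2a₂₁)³) − (3/5 − a₂₁)/(1 − 2a₂₁)² ), â₃₁ = (1/2)·(3/5 − a₂₁)²/(1 − 2a₂₁)² − â₃₂, b̂₂ = (2a₃₁ − 1)/(12·a₂₁·(a₃₁ − a₂₁)), b̂₃ = (1 − 2a₂₁)/(12·a₃₁·(a₃₁ − a₂₁)), and b̂₁ = 1/2 − b̂₂ − b̂₃ (note a₃₁ ≠ a₂₁ automatically since 2a₂₁² − 2a₂₁ + 3/5 has no real root). Then the explicit three-stage two-derivative method with coefficient matrices A (entries A₂₁ = a₂₁, A₃₁ = a₃₁, A₃₂ = 0, all others zero) and Â (entries Â₂₁ = â₂₁, Â₃₁ = â₃₁, Â₃₂ = â₃₂, all others zero), weights b = (1, 0, 0) and b̂ = (b̂₁, b̂₂, b̂₃), satisfies all order conditions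 of Table 1 through order five; in particular, explicit three-stage two-derivative methods of order five exist, breaking the order-four barrier of explicit SSP Runge–Kutta methods. -/
/-!
Since `b = e₁`, `c₁ = ĉ₁ = 0` and only the first column of `A` is nonzero, every term containing
`b` beyond `bᵀe` and every term containing `A` beyond `c = A e` vanishes. Moreover `ĉ = c² / 2`.
All order conditions thus reduce to five scalar identities:
`b̂ᵀe = 1/2`, `b̂ᵀc = 1/6`, `b̂ᵀc² = 1/12`, `b̂ᵀc³ = 1/20` and `b̂ᵀÂc = b̂₃ â₃₂ a₂₁ = 1/120`.
The weights `b̂₂, b̂₃` solve the linear system given by the moments of orders 1 and 2; the third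
moment then amounts to `a₃₁ (1 - 2 a₂₁) = 3/5 - a₂₁`, the definition of `a₃₁`; and the last identity
follows from `â₃₂ = a₃₁ (a₃₁ - a₂₁) / (10 a₂₁ (1 - 2 a₂₁))`.
-/

/-- The one-parameter family of explicit three-stage two-derivative
methods (parameterized by `a₂₁ ∉ {0, 1/2, 3/5}`) with the listed coefficients
satisfies all order conditions through order five; in particular explicit three-stage
two-derivative methods of order five exist. -/
theorem three_stage_fifth_order_exists (a21 : ℝ)
    (h0 : a21 ≠ 0) (h12 : a21 ≠ 1 / 2) (h35 : a21 ≠ 3 / 5)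
    (a31 ah21 ah31 ah32 bh1 bh2 bh3 : ℝ)
    (ha31 : a31 = (3 / 5 - a21) / (1 - 2 * a21))
    (hah21 : ah21 = a21 ^ 2 / 2)
    (hah32 : ah32 = (1 / 10) * ((3 / 5 - a21) ^ 2 / (a21 * (1 - 2 * a21) ^ 3)
      - (3 / 5 - a21) / (1 - 2 * a21) ^ 2))
    (hah31 : ah31 = (1 / 2) * ((3 / 5 - a21) ^ 2 / (1 - 2 * a21) ^ 2) - ah32)
    (hbh2 : bh2 = (2 * a31 - 1) / (12 * a21 * (a31 - a21)))
    (hbh3 : bh3 = (1 - 2 * a21) / (12 * a31 * (a31 - a21)))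
    (hbh1 : bh1 = 1 / 2 - bh2 - bh3)
    (A Ahat : Matrix (Fin 3) (Fin 3) ℝ) (b bhat c chat : Fin 3 → ℝ)
    (hA : A = !![0, 0, 0; a21, 0, 0; a31, 0, 0])
    (hAhat : Ahat = !![0, 0, 0; ah21, 0, 0; ah31, ah32, 0])
    (hb : b = ![1, 0, 0])
    (hbhat : bhat = ![bh1, bh2, bh3])
    (hc : c = A.mulVec (fun _ => 1))
    (hchat : chat = Ahat.mulVec (fun _ => 1)) :
    -- p = 1
    (∑ i, b i = 1)
    -- p = 2
    ∧ (∑ i, b i * c i + ∑ i, bhat i = 1 / 2)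
    -- p = 3
    ∧ (∑ i, b i * c i ^ 2 + 2 * ∑ i, bhat i * c i = 1 / 3)
    ∧ (∑ i, b i * A.mulVec c i + ∑ i, b i * chat i + ∑ i, bhat i * c i = 1 / 6)
    -- p = 4
    ∧ (∑ i, b i * c i ^ 3 + 3 * ∑ i, bhat i * c i ^ 2 = 1 / 4)
    ∧ (∑ i, b i * c i * A.mulVec c i + ∑ i, b i * c i * chat i
        + ∑ i, bhat i * c i ^ 2 + ∑ i, bhat i * A.mulVec c i
        + ∑ i, bhat i * chat i = 1 / 8)
    ∧ (∑ i, b i * A.mulVec (fun j => c j ^ 2) i + 2 * ∑ i, b i * Ahat.mulVec c i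
        + ∑ i, bhat i * c i ^ 2 = 1 / 12)
    ∧ (∑ i, b i * A.mulVec (A.mulVec c) i + ∑ i, b i * A.mulVec chat i
        + ∑ i, b i * Ahat.mulVec c i + ∑ i, bhat i * A.mulVec c i
        + ∑ i, bhat i * chat i = 1 / 24)
    -- p = 5
    ∧ (∑ i, b i * c i ^ 4 + 4 * ∑ i, bhat i * c i ^ 3 = 1 / 5)
    ∧ (∑ i, b i * c i ^ 2 * A.mulVec c i + ∑ i, b i * c i ^ 2 * chat i
        + ∑ i, bhat i * c i ^ 3 + 2 * ∑ i, bhat i * c i * A.mulVec c i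
        + 2 * ∑ i, bhat i * c i * chat i = 1 / 10)
    ∧ (∑ i, b i * c i * A.mulVec (fun j => c j ^ 2) i
        + 2 * ∑ i, b i * c i * Ahat.mulVec c i + ∑ i, bhat i * c i ^ 3
        + ∑ i, bhat i * A.mulVec (fun j => c j ^ 2) i
        + 2 * ∑ i, bhat i * Ahat.mulVec c i = 1 / 15)
    ∧ (∑ i, b i * c i * A.mulVec (A.mulVec c) i + ∑ i, b i * c i * A.mulVec chat i
        + ∑ i, b i * c i * Ahat.mulVec c i + ∑ i, bhat i * c i * A.mulVec c i
        + ∑ i, bhat i * c i * chat i + ∑ i, bhat i * A.mulVec (A.mulVec c) i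
        + ∑ i, bhat i * A.mulVec chat i + ∑ i, bhat i * Ahat.mulVec c i = 1 / 30)
    ∧ (∑ i, b i * A.mulVec c i * A.mulVec c i + 2 * ∑ i, b i * chat i * A.mulVec c i
        + ∑ i, b i * chat i ^ 2 + 2 * ∑ i, bhat i * c i * A.mulVec c i
        + 2 * ∑ i, bhat i * c i * chat i = 1 / 20)
    ∧ (∑ i, b i * A.mulVec (fun j => c j ^ 3) i
        + 3 * ∑ i, b i * Ahat.mulVec (fun j => c j ^ 2) i
        + ∑ i, bhat i * c i ^ 3 = 1 / 20)
    ∧ (∑ i, b i * A.mulVec (fun j => c j * A.mulVec c j) i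
        + ∑ i, b i * A.mulVec (fun j => c j * chat j) i
        + ∑ i, b i * Ahat.mulVec (fun j => c j ^ 2) i
        + ∑ i, b i * Ahat.mulVec (A.mulVec c) i
        + ∑ i, b i * Ahat.mulVec chat i
        + ∑ i, bhat i * c i * A.mulVec c i + ∑ i, bhat i * c i * chat i = 1 / 40)
    ∧ (∑ i, b i * A.mulVec (A.mulVec (fun j => c j ^ 2)) i
        + 2 * ∑ i, b i * A.mulVec (Ahat.mulVec c) i
        + ∑ i, b i * Ahat.mulVec (fun j => c j ^ 2) i
        + ∑ i, bhat i * A.mulVec (fun j => c j ^ 2) i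
        + 2 * ∑ i, bhat i * Ahat.mulVec c i = 1 / 60)
    ∧ (∑ i, b i * A.mulVec (A.mulVec (A.mulVec c)) i
        + ∑ i, b i * A.mulVec (A.mulVec chat) i
        + ∑ i, b i * A.mulVec (Ahat.mulVec c) i
        + ∑ i, b i * Ahat.mulVec (A.mulVec c) i
        + ∑ i, b i * Ahat.mulVec chat i
        + ∑ i, bhat i * A.mulVec (A.mulVec c) i
        + ∑ i, bhat i * A.mulVec chat i
        + ∑ i, bhat i * Ahat.mulVec c i = 1 / 120) := by
  have hd : 1 - 2 * a21 ≠ 0 := fun h => h12 (by linarith)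
  have hn : 3 / 5 - a21 ≠ 0 := fun h => h35 (by linarith)
  have h31 : a31 ≠ 0 := by rw [ha31]; exact div_ne_zero hn hd
  have key : a31 * (1 - 2 * a21) = 3 / 5 - a21 := by rw [ha31, div_mul_cancel₀ _ hd]
  -- Equality of the two nodes would force `2 a₂₁² - 2 a₂₁ + 3/5 = 0`, of negative discriminant.
  have hs : a31 - a21 ≠ 0 := by
    intro h
    have h' : a31 = a21 := by linarith
    rw [h'] at key
    nlinarith [sq_nonneg (2 * a21 - 1)]
  have m1 : bh2 * a21 + bh3 * a31 = 1 / 6 := by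
    rw [hbh2, hbh3]; field_simp; ring
  have m2 : bh2 * a21 ^ 2 + bh3 * a31 ^ 2 = 1 / 12 := by
    rw [hbh2, hbh3]; field_simp; ring
  -- By the first two moments, the third is `(a₂₁ + a₃₁) / 12 - a₂₁ a₃₁ / 6`.
  have m3 : bh2 * a21 ^ 3 + bh3 * a31 ^ 3 = 1 / 20 := by
    linear_combination (a21 + a31) * m2 - a21 * a31 * m1 + key / 12
  have hsum : ah31 + ah32 = a31 ^ 2 / 2 := by
    rw [hah31, ha31]; field_simp; ring
  have hah32' : ah32 = a31 * (a31 - a21) / (10 * a21 * (1 - 2 * a21)) := by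
    rw [hah32, ← key]; field_simp
  have q : bh3 * (ah32 * a21) = 1 / 120 := by
    rw [hbh3, hah32']; field_simp; norm_num
  have hah31' : ah31 = a31 ^ 2 / 2 - ah32 := by linarith
  have hc' : c = ![0, a21, a31] := by
    rw [hc, hA]; ext i; fin_cases i <;> simp [Matrix.mulVec, dotProduct, Fin.sum_univ_three]
  have hchat' : chat = ![0, a21 ^ 2 / 2, a31 ^ 2 / 2] := by
    rw [hchat, hAhat, hah21, hah31']
    ext i; fin_cases i <;> simp [Matrix.mulVec, dotProduct, Fin.sum_univ_three]
  clear hc hchat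
  subst hA hAhat hb hbhat hc' hchat'
  simp only [Matrix.mulVec, dotProduct, Fin.sum_univ_three, Matrix.of_apply, Matrix.cons_val]
  refine ⟨?_, ?_, ?_, ?_, ?_, ?_, ?_, ?_, ?_, ?_, ?_, ?_, ?_, ?_, ?_, ?_, ?_⟩
  · norm_num
  · linear_combination hbh1
  · linear_combination 2 * m1
  · linear_combination m1
  · linear_combination 3 * m2
  · linear_combination 3 / 2 * m2
  · linear_combination m2
  · linear_combination 1 / 2 * m2
  · linear_combination 4 * m3
  · linear_combination 2 * m3
  · linear_combination m3 + 2 * q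
  · linear_combination 1 / 2 * m3 + q
  · linear_combination m3
  · linear_combination m3
  · linear_combination 1 / 2 * m3
  · linear_combination 2 * q
  · linear_combination q
end

section
/- Let u : ℤ → ℝ and let 0 ≤ λ ≤ √3 − 1. Define D⁺u_j = u_{j+1} − u_j and D²u_j = u_{j+1} − 2u_j + u_{j−1}, and apply the unique two-stage fourth-order two-derivative method to the linear advection equation with upwind first derivative and centered second difference: u*_j = u_j + (λ/2)·D⁺u_j + (λ²/8)·D²u_j, and u'_j = u_j + λ·D⁺u_j + (λ²/6)·(D²u_j + 2·D²u*_j). Then ‖u'‖_TV ≤ ‖u‖_TV, i.e., the fully discrete scheme is total variation diminishing for λ ≤ √3 − 1. -/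
/-!
Eliminating `ustar` writes the scheme as a five-point linear stencil
`u' j = ∑ c_k u (j + k)`, `-2 ≤ k ≤ 2`, whose coefficients sum to `1`. Such a stencil is total
variation diminishing as soon as all `c_k` are nonnegative, by the triangle inequality and
translation invariance of the sum over `ℤ` (`tv_le_of_convex_stencil`). The binding coefficient is
the central one, `c_0 = (λ² + 2λ - 2)(λ² - 2) / 4`; its first factor vanishes exactly at
`λ = √3 - 1`, which is where the step-size restriction comes from.
-/

theorem tsum_ofReal_mul_shift (c : ℝ) (hc : 0 ≤ c) (f : ℤ → ℝ) (k : ℤ) :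
    ∑' j : ℤ, ENNReal.ofReal (c * f (j + k)) =
      ENNReal.ofReal c * ∑' j : ℤ, ENNReal.ofReal (f j) := by
  simp_rw [ENNReal.ofReal_mul hc]
  rw [ENNReal.tsum_mul_left]
  congr 1
  exact (Equiv.addRight k).tsum_eq (fun j => ENNReal.ofReal (f j))

/-- A finite stencil with nonnegative weights summing to `1` does not increase the total
variation, including when the latter is infinite. -/
theorem tv_le_of_convex_stencil (s : Finset ℤ) (c : ℤ → ℝ) (hc : ∀ k ∈ s, 0 ≤ c k)
    (hsum : ∑ k ∈ s, c k = 1) (u v : ℤ → ℝ) (hv : ∀ j, v j = ∑ k ∈ s, c k * u (j + k)) :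
    (∑' j : ℤ, ENNReal.ofReal |v (j + 1) - v j|) ≤
      ∑' j : ℤ, ENNReal.ofReal |u (j + 1) - u j| := by
  have hpt : ∀ j, ENNReal.ofReal |v (j + 1) - v j| ≤
      ∑ k ∈ s, ENNReal.ofReal (c k * |u (j + k + 1) - u (j + k)|) := by
    intro j
    rw [← ENNReal.ofReal_sum_of_nonneg (fun k hk => mul_nonneg (hc k hk) (abs_nonneg _))]
    apply ENNReal.ofReal_le_ofReal
    rw [hv, hv, ← Finset.sum_sub_distrib]
    refine (Finset.abs_sum_le_sum_abs _ _).trans (Finset.sum_le_sum fun k hk => ?_)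
    rw [← mul_sub, abs_mul, abs_of_nonneg (hc k hk), add_right_comm]
  refine (ENNReal.tsum_le_tsum hpt).trans (le_of_eq ?_)
  rw [Summable.tsum_finsetSum (fun _ _ => ENNReal.summable)]
  rw [Finset.sum_congr rfl fun k hk =>
    tsum_ofReal_mul_shift (c k) (hc k hk) (fun i => |u (i + 1) - u i|) k]
  rw [← Finset.sum_mul, ← ENNReal.ofReal_sum_of_nonneg hc, hsum, ENNReal.ofReal_one, one_mul]

/-- Weight of `u (j + k)` in `u' j` after eliminating the intermediate stage, with `a = λ`. -/
noncomputable def stencilCoeff (a : ℝ) (k : ℤ) : ℝ :=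
  if k = 2 then a ^ 3 / 6 + a ^ 4 / 24
  else if k = 1 then a + a ^ 2 / 2 - a ^ 3 / 2 - a ^ 4 / 6
  else if k = 0 then (a ^ 2 + 2 * a - 2) * (a ^ 2 - 2) / 4
  else if k = -1 then a ^ 2 / 2 - a ^ 3 / 6 - a ^ 4 / 6
  else if k = -2 then a ^ 4 / 24
  else 0

/-- The unique two-stage fourth-order two-derivative method applied
to linear advection with upwind first derivative and centered second difference is
total variation diminishing for `0 ≤ λ ≤ √3 − 1`. -/
theorem two_stage_fourth_order_tvd (u ustar u' : ℤ → ℝ) (lam : ℝ)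
    (h0 : 0 ≤ lam) (h1 : lam ≤ Real.sqrt 3 - 1)
    (hstar : ∀ j : ℤ, ustar j = u j + (lam / 2) * (u (j + 1) - u j)
      + (lam ^ 2 / 8) * (u (j + 1) - 2 * u j + u (j - 1)))
    (hu' : ∀ j : ℤ, u' j = u j + lam * (u (j + 1) - u j)
      + (lam ^ 2 / 6) * ((u (j + 1) - 2 * u j + u (j - 1))
        + 2 * (ustar (j + 1) - 2 * ustar j + ustar (j - 1)))) :
    (∑' j : ℤ, ENNReal.ofReal |u' (j + 1) - u' j|) ≤
      ∑' j : ℤ, ENNReal.ofReal |u (j + 1) - u j| := by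
  have hq : lam ^ 2 + 2 * lam - 2 ≤ 0 := by
    have h3 : Real.sqrt 3 ^ 2 = 3 := Real.sq_sqrt (by norm_num)
    nlinarith [Real.sqrt_nonneg 3]
  have hl : lam ≤ 1 := by nlinarith
  have hsq : lam ^ 2 ≤ 1 := by nlinarith
  have hexp : ∀ f : ℤ → ℝ, ∑ k ∈ ({-2, -1, 0, 1, 2} : Finset ℤ), f k =
      f (-2) + (f (-1) + (f 0 + (f 1 + f 2))) := by
    intro f
    simp
  refine tv_le_of_convex_stencil {-2, -1, 0, 1, 2} (stencilCoeff lam) ?_ ?_ u u' ?_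
  · intro k hk
    simp only [Finset.mem_insert, Finset.mem_singleton] at hk
    rcases hk with rfl | rfl | rfl | rfl | rfl <;> norm_num [stencilCoeff]
    · positivity
    · have : lam ^ 2 * (lam + lam ^ 2) ≤ lam ^ 2 * 2 := by gcongr; linarith
      nlinarith [sq_nonneg lam]
    · have := mul_nonneg_of_nonpos_of_nonpos hq (show lam ^ 2 - 2 ≤ 0 by linarith)
      linarith
    · have h3 : lam * lam ^ 2 ≤ lam * 1 := by gcongr
      have h4 : lam ^ 2 * lam ^ 2 ≤ lam ^ 2 * 1 := by gcongr
      nlinarith [sq_nonneg lam]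
    · positivity
  · rw [hexp]
    norm_num [stencilCoeff]
    ring
  · intro j
    rw [hexp, hu', hstar, hstar, hstar]
    norm_num [stencilCoeff]
    rw [show j + 1 + 1 = j + 2 by ring, show j - 1 - 1 = j - 2 by ring,
      show j + -1 = j - 1 by ring, show j + -2 = j - 2 by ring]
    ring
end

section
/- Let V be a real normed vector space, F, Ḟ : V → V, Δt_FE > 0 and K > 0. Assume F satisfies the forward Euler condition and Ḟ satisfies the second derivative condition with constant K. Let r > 0 satisfy r⁴ + 4K²r³ − 12K²r² − 24K⁴r + 24K⁴ = 0, r² ≤ 4K², and 4rK² + r² ≤ 8K². Then the unique two-stage fourth-order two-derivative method u* = u + (Δt/2)·F(u) + (Δt²/8)·Ḟ(u), u^{n+1} = u + Δt·F(u) + (Δt²/6)·(Ḟ(u) + 2Ḟ(u*)) satisfies ‖u*‖ ≤ ‖u‖ and ‖u^{n+1}‖ ≤ ‖u‖ for every u ∈ V and every Δt with 0 ≤ Δt ≤ r·Δt_FE. -/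
/-!
With step size `dt ≤ r * dtFE`, both stages are convex combinations of vectors of norm at most
`‖u‖`: forward Euler steps `v + (dt / r) • F v` and second derivative steps
`v + (K / r * dt) ^ 2 • Fd v`. This is the Shu–Osher form of the method. The inequalities
`4rK² + r² ≤ 8K²` and `r² ≤ 4K²` make the weights nonnegative, and the quartic equation for `r`
says that the weights of the update sum to one.
-/

/-- The closed ball of radius `M` is closed under convex combinations of three points. -/
lemma norm_convex_comb_three_le {V : Type*} [NormedAddCommGroup V] [NormedSpace ℝ V]
    {a b c M : ℝ} {x y z : V} (ha : 0 ≤ a) (hb : 0 ≤ b) (hc : 0 ≤ c) (habc : a + b + c = 1)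
    (hx : ‖x‖ ≤ M) (hy : ‖y‖ ≤ M) (hz : ‖z‖ ≤ M) : ‖a • x + b • y + c • z‖ ≤ M := by
  calc ‖a • x + b • y + c • z‖ ≤ ‖a • x‖ + ‖b • y‖ + ‖c • z‖ := norm_add₃_le
    _ = a * ‖x‖ + b * ‖y‖ + c * ‖z‖ := by
      rw [norm_smul_of_nonneg ha, norm_smul_of_nonneg hb, norm_smul_of_nonneg hc]
    _ ≤ a * M + b * M + c * M := by gcongr
    _ = M := by rw [← add_mul, ← add_mul, habc, one_mul]

/-- The unique two-stage fourth-order two-derivative method is SSP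
with coefficient `r`, where `r > 0` is a root of
`r⁴ + 4K²r³ − 12K²r² − 24K⁴r + 24K⁴` satisfying `r² ≤ 4K²` and `4rK² + r² ≤ 8K²`:
both the intermediate stage and the update are bounded in norm by `‖u‖`. -/
theorem two_stage_fourth_order_ssp {V : Type*} [NormedAddCommGroup V] [NormedSpace ℝ V]
    (F Fd : V → V) (dtFE K : ℝ) (hdtFE : 0 < dtFE) (hK : 0 < K)
    (hFE : ∀ v : V, ∀ t : ℝ, 0 ≤ t → t ≤ dtFE → ‖v + t • F v‖ ≤ ‖v‖)
    (hSD : ∀ v : V, ∀ t : ℝ, 0 ≤ t → t ≤ K * dtFE → ‖v + t ^ 2 • Fd v‖ ≤ ‖v‖)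
    (r : ℝ) (hr : 0 < r)
    (hpoly : r ^ 4 + 4 * K ^ 2 * r ^ 3 - 12 * K ^ 2 * r ^ 2
      - 24 * K ^ 4 * r + 24 * K ^ 4 = 0)
    (hr1 : r ^ 2 ≤ 4 * K ^ 2) (hr2 : 4 * r * K ^ 2 + r ^ 2 ≤ 8 * K ^ 2)
    (u ustar unew : V) (dt : ℝ) (hdt0 : 0 ≤ dt) (hdt : dt ≤ r * dtFE)
    (hstar : ustar = u + (dt / 2) • F u + (dt ^ 2 / 8) • Fd u)
    (hnew : unew = u + dt • F u + (dt ^ 2 / 6) • (Fd u + (2 : ℝ) • Fd ustar)) :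
    ‖ustar‖ ≤ ‖u‖ ∧ ‖unew‖ ≤ ‖u‖ := by
  have hr0 : r ≠ 0 := hr.ne'
  have hK0 : K ≠ 0 := hK.ne'
  have hdt' : dt / r ≤ dtFE := by rw [div_le_iff₀ hr]; linarith
  have hA : ‖u + (dt / r) • F u‖ ≤ ‖u‖ := hFE u _ (by positivity) hdt'
  have hB : ∀ v, ‖v + (K / r * dt) ^ 2 • Fd v‖ ≤ ‖v‖ := fun v =>
    hSD v _ (by positivity) (by
      calc K / r * dt = K * (dt / r) := by ring
        _ ≤ K * dtFE := by gcongr)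
  have hS : ‖ustar‖ ≤ ‖u‖ := by
    have hdecomp : ustar = (1 - (4 * r * K ^ 2 + r ^ 2) / (8 * K ^ 2)) • u
        + (r / 2) • (u + (dt / r) • F u)
        + (r ^ 2 / (8 * K ^ 2)) • (u + (K / r * dt) ^ 2 • Fd u) := by
      rw [hstar]
      match_scalars <;> field_simp <;> ring
    rw [hdecomp]
    refine norm_convex_comb_three_le ?_ (by positivity) (by positivity) ?_ le_rfl hA (hB u)
    · rw [sub_nonneg, div_le_one (by positivity)]
      exact hr2
    · field_simp
      ring
  refine ⟨hS, ?_⟩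
  -- Clearing the denominator `24K⁴` turns this sum into the quartic equation for `r`.
  have hsum : r * (1 - r ^ 2 / (6 * K ^ 2)) + r ^ 2 * (4 * K ^ 2 - r ^ 2) / (24 * K ^ 4)
      + r ^ 2 / (3 * K ^ 2) = 1 := by
    have h : r * (1 - r ^ 2 / (6 * K ^ 2)) + r ^ 2 * (4 * K ^ 2 - r ^ 2) / (24 * K ^ 4)
        + r ^ 2 / (3 * K ^ 2) - 1 = -(r ^ 4 + 4 * K ^ 2 * r ^ 3 - 12 * K ^ 2 * r ^ 2
          - 24 * K ^ 4 * r + 24 * K ^ 4) / (24 * K ^ 4) := by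
      field_simp
      ring
    rw [hpoly, neg_zero, zero_div] at h
    linarith
  have hdecomp : unew = (r * (1 - r ^ 2 / (6 * K ^ 2))) • (u + (dt / r) • F u)
      + (r ^ 2 * (4 * K ^ 2 - r ^ 2) / (24 * K ^ 4)) • (u + (K / r * dt) ^ 2 • Fd u)
      + (r ^ 2 / (3 * K ^ 2)) • (ustar + (K / r * dt) ^ 2 • Fd ustar) := by
    -- Only the free occurrence of `ustar` is expanded; the value `Fd ustar` stays opaque.
    generalize Fd ustar = w at hnew ⊢
    rw [hnew, hstar]
    match_scalars
    · linear_combination -hsum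
    all_goals field_simp
    all_goals ring
  rw [hdecomp]
  refine norm_convex_comb_three_le (mul_nonneg hr.le ?_) ?_ (by positivity) hsum hA (hB u)
    ((hB ustar).trans hS)
  · rw [sub_nonneg, div_le_one (by positivity)]
    nlinarith [sq_nonneg K]
  · exact div_nonneg (mul_nonneg (sq_nonneg r) (sub_nonneg.2 hr1)) (by positivity)
end
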